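/- arXiv:2511.06207 — 4 statements merged into one kernel-verified Lean document; each statement's English description precedes it below -/
import Mathlib

section
/- Let (T_i)_{i=1}^∞ be a sequence of bounded linear operators from a Banach space X to a normed linear space Y. Then either (T_i)_{i=1}^∞ is mean equicontinuous or (T_i)_{i=1}^∞ is mean sensitive (exactly one of the two holds, since the two notions are mutually exclusive when X is nonzero). -/
open Filter Topology

variable {X Y : Type*} [NormedAddCommGroup X] [NormedSpace ℝ X]
  [NormedAddCommGroup Y] [NormedSpace ℝ Y]

/-- The Cesàro average `(1/n) ∑_{i=1}^{n} ‖T i x - T i y‖`. -/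
noncomputable def mavg (T : ℕ → X →L[ℝ] Y) (x y : X) (n : ℕ) : ℝ :=
  (∑ i ∈ Finset.Icc 1 n, ‖T i x - T i y‖) / n

/-- The Cesàro average `(1/n) ∑_{i=1}^{n} ‖T i x‖`. -/
noncomputable def avg (T : ℕ → X →L[ℝ] Y) (x : X) (n : ℕ) : ℝ :=
  (∑ i ∈ Finset.Icc 1 n, ‖T i x‖) / n

/-- `limsup_n (1/n) ∑_{i=1}^{n} ‖T i x - T i y‖`, computed in `EReal`. -/
noncomputable def msup (T : ℕ → X →L[ℝ] Y) (x y : X) : EReal :=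
  Filter.limsup (fun n => (mavg T x y n : EReal)) Filter.atTop

/-- `liminf_n (1/n) ∑_{i=1}^{n} ‖T i x - T i y‖`, computed in `EReal`. -/
noncomputable def minf (T : ℕ → X →L[ℝ] Y) (x y : X) : EReal :=
  Filter.liminf (fun n => (mavg T x y n : EReal)) Filter.atTop

/-- `limsup_n (1/n) ∑_{i=1}^{n} ‖T i x‖`, computed in `EReal`. -/
noncomputable def asup (T : ℕ → X →L[ℝ] Y) (x : X) : EReal :=
  Filter.limsup (fun n => (avg T x n : EReal)) Filter.atTop

/-- `liminf_n (1/n) ∑_{i=1}^{n} ‖T i x‖`, computed in `EReal`. -/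
noncomputable def ainf (T : ℕ → X →L[ℝ] Y) (x : X) : EReal :=
  Filter.liminf (fun n => (avg T x n : EReal)) Filter.atTop

/-- Mean equicontinuity of the sequence `(T i)`. -/
def MeanEquicontinuous (T : ℕ → X →L[ℝ] Y) : Prop :=
  ∀ ε : ℝ, 0 < ε → ∃ δ : ℝ, 0 < δ ∧ ∀ x y : X, ‖x - y‖ < δ → msup T x y < (ε : EReal)

/-- Mean sensitivity of the sequence `(T i)`. -/
def MeanSensitive (T : ℕ → X →L[ℝ] Y) : Prop :=
  ∃ δ : ℝ, 0 < δ ∧ ∀ x : X, ∀ ε : ℝ, 0 < ε →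
    ∃ y : X, ‖x - y‖ < ε ∧ (δ : EReal) < msup T x y

/-! By linearity, both notions depend only on the behaviour of `asup T` near `0`: a failure of
mean equicontinuity anywhere can be translated to every point, where it witnesses mean
sensitivity. -/

lemma msup_eq_asup_sub (T : ℕ → X →L[ℝ] Y) (x y : X) : msup T x y = asup T (x - y) := by
  simp only [msup, mavg, asup, avg, map_sub]

lemma meanEquicontinuous_iff_asup_lt (T : ℕ → X →L[ℝ] Y) :
    MeanEquicontinuous T ↔
      ∀ ε : ℝ, 0 < ε → ∃ δ : ℝ, 0 < δ ∧ ∀ z : X, ‖z‖ < δ → asup T z < (ε : EReal) := by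
  simp only [MeanEquicontinuous, msup_eq_asup_sub]
  refine forall₂_congr fun ε _ => exists_congr fun δ => and_congr_right fun _ => ?_
  exact ⟨fun h z hz => by simpa only [sub_zero] using h z 0 (by rwa [sub_zero]),
    fun h x y => h (x - y)⟩

lemma meanSensitive_iff_lt_asup (T : ℕ → X →L[ℝ] Y) :
    MeanSensitive T ↔
      ∃ δ : ℝ, 0 < δ ∧ ∀ ε : ℝ, 0 < ε → ∃ z : X, ‖z‖ < ε ∧ (δ : EReal) < asup T z := by
  simp only [MeanSensitive, msup_eq_asup_sub]
  refine exists_congr fun δ => and_congr_right fun _ => ⟨fun h ε hε => ?_, fun h x ε hε => ?_⟩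
  · obtain ⟨y, hy⟩ := h 0 ε hε
    exact ⟨0 - y, hy⟩
  · obtain ⟨z, hz⟩ := h ε hε
    exact ⟨x - z, by rwa [sub_sub_cancel]⟩

lemma MeanEquicontinuous.not_meanSensitive {T : ℕ → X →L[ℝ] Y} (hT : MeanEquicontinuous T) :
    ¬ MeanSensitive T := by
  rw [meanSensitive_iff_lt_asup]
  rintro ⟨δ, hδ, hsens⟩
  obtain ⟨η, hη, hsmall⟩ := (meanEquicontinuous_iff_asup_lt T).1 hT δ hδ
  obtain ⟨z, hz, hlarge⟩ := hsens η hη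
  exact lt_asymm hlarge (hsmall z hz)

lemma meanSensitive_of_not_meanEquicontinuous {T : ℕ → X →L[ℝ] Y}
    (hT : ¬ MeanEquicontinuous T) : MeanSensitive T := by
  rw [meanEquicontinuous_iff_asup_lt] at hT
  push Not at hT
  obtain ⟨ε, hε, hlarge⟩ := hT
  refine (meanSensitive_iff_lt_asup T).2 ⟨ε / 2, half_pos hε, fun η hη => ?_⟩
  obtain ⟨z, hz, hεz⟩ := hlarge η hη
  exact ⟨z, hz, (EReal.coe_lt_coe_iff.2 (half_lt_self hε)).trans_le hεz⟩

theorem meanEquicontinuous_or_meanSensitive_general (T : ℕ → X →L[ℝ] Y) :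
    (MeanEquicontinuous T ∨ MeanSensitive T) ∧ ¬ (MeanEquicontinuous T ∧ MeanSensitive T) :=
  ⟨or_iff_not_imp_left.2 meanSensitive_of_not_meanEquicontinuous,
    fun ⟨hequi, hsens⟩ => hequi.not_meanSensitive hsens⟩

/-- **Dichotomy between mean equicontinuity and mean sensitivity.**
A sequence of bounded linear operators from a Banach space `X` to a normed space `Y`
is either mean equicontinuous or mean sensitive; moreover, if `X` is nonzero, the
two notions are mutually exclusive, so exactly one of them holds. -/
theorem meanEquicontinuous_or_meanSensitive [CompleteSpace X] (T : ℕ → X →L[ℝ] Y) :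
    (MeanEquicontinuous T ∨ MeanSensitive T) ∧
      ((∃ x : X, x ≠ 0) → ¬ (MeanEquicontinuous T ∧ MeanSensitive T)) := by
  obtain ⟨hor, hexcl⟩ := meanEquicontinuous_or_meanSensitive_general T
  exact ⟨hor, fun _ => hexcl⟩
end

section
/- Let (T_i)_{i=1}^∞ be a sequence of bounded linear operators from a Banach space X to a normed linear space Y. The following are equivalent: (1) (T_i) is mean equicontinuous; (2) for every x∈X, sup_{n∈ℕ} (1/n)∑_{i=1}^n ‖T_i x‖ < ∞; (3) (T_i) is absolutely Cesàro bounded; (4) for every ε>0 there exists δ>0 such that for all x,y∈X with ‖x−y‖<δ, sup_{n∈ℕ} (1/n)∑_{i=1}^n ‖T_i x − T_i y‖ < ε. -/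
/-!
Each Cesàro average `x ↦ (1/n) ∑_{i=1}^{n} ‖T i x‖` is a continuous seminorm on `X`, so on a
barrelled space the uniform boundedness principle for seminorms turns pointwise boundedness of the
averages into a bound `C * ‖x‖` uniform in `n`. Mean equicontinuity makes the limsup of the averages
finite at every `x` near `0`, so the averages are bounded there, since only finitely many terms can
exceed the limsup by more than `1`; homogeneity spreads this to every `x`.
-/

open Filter Topology

variable {X Y : Type*} [NormedAddCommGroup X] [NormedSpace ℝ X]
  [NormedAddCommGroup Y] [NormedSpace ℝ Y]

/-- The sequence `(T i)` is absolutely Cesàro bounded. -/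
def AbsolutelyCesaroBounded (T : ℕ → X →L[ℝ] Y) : Prop :=
  ∃ C : ℝ, 0 < C ∧ ∀ x : X, ∀ n : ℕ, avg T x n ≤ C * ‖x‖

theorem isBoundedUnder_le_of_limsup_coe_lt_top {α : Type*} {l : Filter α} {u : α → ℝ}
    (h : limsup (fun a => (u a : EReal)) l < ⊤) : l.IsBoundedUnder (· ≤ ·) u := by
  obtain ⟨r, hr, -⟩ := EReal.lt_iff_exists_real_btwn.mp h
  refine isBoundedUnder_of_eventually_le (a := r) ?_
  filter_upwards [eventually_lt_of_limsup_lt hr] with a ha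
  exact (EReal.coe_lt_coe_iff.mp ha).le

section SeminormFamily

variable {ι 𝕜 E : Type*} [NontriviallyNormedField 𝕜]

theorem bddAbove_range_seminorm_of_eventually_nhds_zero [AddCommGroup E] [Module 𝕜 E]
    [TopologicalSpace E] [ContinuousSMul 𝕜 E] {p : ι → Seminorm 𝕜 E}
    (h : ∀ᶠ x in 𝓝 0, BddAbove (Set.range fun i => p i x)) (x : E) :
    BddAbove (Set.range fun i => p i x) := by
  have tendsto_smul : Tendsto (fun a : 𝕜 => a • x) (𝓝[≠] 0) (𝓝 0) :=
    (Continuous.tendsto' (by fun_prop) 0 0 (zero_smul 𝕜 x)).mono_left nhdsWithin_le_nhds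
  obtain ⟨a, ⟨M, hM⟩, ha⟩ := ((tendsto_smul.eventually h).and self_mem_nhdsWithin).exists
  refine ⟨M / ‖a‖, Set.forall_mem_range.mpr fun i => ?_⟩
  rw [le_div_iff₀' (norm_pos_iff.mpr ha), ← map_smul_eq_mul]
  exact hM ⟨i, rfl⟩

theorem exists_forall_seminorm_le_of_bddAbove [SeminormedAddCommGroup E] [NormedSpace 𝕜 E]
    [BarrelledSpace 𝕜 E] {p : ι → Seminorm 𝕜 E} (hp : ∀ i, Continuous (p i))
    (hbdd : ∀ x, BddAbove (Set.range fun i => p i x)) :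
    ∃ C, 0 < C ∧ ∀ x i, p i x ≤ C * ‖x‖ := by
  have bddAbove_range : BddAbove (Set.range p) := Seminorm.bddAbove_range_iff.mpr hbdd
  have continuous_iSup : Continuous (⨆ i, p i : Seminorm 𝕜 E) := by
    rw [Seminorm.coe_iSup_eq bddAbove_range]
    exact Seminorm.continuous_iSup p hp bddAbove_range
  obtain ⟨C, hC, hle⟩ := Seminorm.bound_of_continuous_normedSpace _ continuous_iSup
  exact ⟨C, hC, fun x i => (le_ciSup bddAbove_range i x).trans (hle x)⟩

end SeminormFamily

/-- The Cesàro average `avg T · n` bundled as a seminorm, which gives access to the uniform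
boundedness principle for seminorms. -/
noncomputable def avgSeminorm (T : ℕ → X →L[ℝ] Y) (n : ℕ) : Seminorm ℝ X :=
  Seminorm.of (avg T · n)
    (fun x y => by
      simp only [avg, map_add]
      rw [← add_div, ← Finset.sum_add_distrib]
      gcongr
      exact norm_add_le _ _)
    (fun a x => by
      simp only [avg, map_smul, norm_smul]
      rw [← Finset.mul_sum, mul_div_assoc])

@[simp]
theorem avgSeminorm_apply (T : ℕ → X →L[ℝ] Y) (n : ℕ) (x : X) : avgSeminorm T n x = avg T x n :=
  rfl

theorem continuous_avgSeminorm (T : ℕ → X →L[ℝ] Y) (n : ℕ) : Continuous (avgSeminorm T n) := by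
  change Continuous fun x => (∑ i ∈ Finset.Icc 1 n, ‖T i x‖) / n
  fun_prop

theorem mavg_eq_avg_sub (T : ℕ → X →L[ℝ] Y) (x y : X) (n : ℕ) :
    mavg T x y n = avg T (x - y) n := by
  simp only [mavg, avg, map_sub]

theorem bddAbove_range_avg_sub_of_msup_lt_top {T : ℕ → X →L[ℝ] Y} {x y : X}
    (h : msup T x y < ⊤) : BddAbove (Set.range fun n => avg T (x - y) n) := by
  simp only [← mavg_eq_avg_sub]
  exact (isBoundedUnder_le_of_limsup_coe_lt_top h).bddAbove_range

theorem msup_le_of_forall_mavg_le {T : ℕ → X →L[ℝ] Y} {x y : X} {c : ℝ}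
    (h : ∀ n, mavg T x y n ≤ c) : msup T x y ≤ c :=
  limsup_le_of_le (h := .of_forall fun n => EReal.coe_le_coe_iff.mpr (h n))

theorem MeanEquicontinuous.bddAbove_range_avg {T : ℕ → X →L[ℝ] Y} (h : MeanEquicontinuous T)
    (x : X) : BddAbove (Set.range fun n => avg T x n) := by
  obtain ⟨δ, hδ, hmsup⟩ := h 1 one_pos
  refine bddAbove_range_seminorm_of_eventually_nhds_zero (p := avgSeminorm T) ?_ x
  filter_upwards [Metric.ball_mem_nhds 0 hδ] with z hz
  have hz0 : msup T z 0 < ⊤ := (hmsup z 0 (mem_ball_iff_norm.mp hz)).trans (EReal.coe_lt_top 1)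
  simpa only [avgSeminorm_apply, sub_zero] using bddAbove_range_avg_sub_of_msup_lt_top hz0

theorem AbsolutelyCesaroBounded.exists_forall_mavg_le {T : ℕ → X →L[ℝ] Y}
    (h : AbsolutelyCesaroBounded T) {ε : ℝ} (hε : 0 < ε) :
    ∃ δ : ℝ, 0 < δ ∧ ∀ x y : X, ‖x - y‖ < δ → ∃ c : ℝ, c < ε ∧ ∀ n : ℕ, mavg T x y n ≤ c := by
  obtain ⟨C, hC, hle⟩ := h
  refine ⟨ε / C, div_pos hε hC, fun x y hxy => ⟨C * ‖x - y‖, (lt_div_iff₀' hC).mp hxy, fun n => ?_⟩⟩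
  rw [mavg_eq_avg_sub]
  exact hle (x - y) n

theorem meanEquicontinuous_tfae_general [BarrelledSpace ℝ X] (T : ℕ → X →L[ℝ] Y) :
    List.TFAE [
      MeanEquicontinuous T,
      ∀ x : X, BddAbove (Set.range fun n => avg T x n),
      AbsolutelyCesaroBounded T,
      ∀ ε : ℝ, 0 < ε → ∃ δ : ℝ, 0 < δ ∧ ∀ x y : X, ‖x - y‖ < δ →
        ∃ c : ℝ, c < ε ∧ ∀ n : ℕ, mavg T x y n ≤ c] := by
  tfae_have 1 → 2 := MeanEquicontinuous.bddAbove_range_avg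
  tfae_have 2 → 3 := exists_forall_seminorm_le_of_bddAbove (continuous_avgSeminorm T)
  tfae_have 3 → 4 := fun h _ => h.exists_forall_mavg_le
  tfae_have 4 → 1 := by
    intro h ε hε
    obtain ⟨δ, hδ, hmavg⟩ := h ε hε
    refine ⟨δ, hδ, fun x y hxy => ?_⟩
    obtain ⟨c, hc, hle⟩ := hmavg x y hxy
    exact (msup_le_of_forall_mavg_le hle).trans_lt (EReal.coe_lt_coe_iff.mpr hc)
  tfae_finish

/-- **Mean version of the uniform boundedness theorem.** For a sequence of bounded
linear operators from a Banach space to a normed space, mean equicontinuity,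
pointwise boundedness of the Cesàro averages, absolute Cesàro boundedness, and a
uniform-`sup` version of mean equicontinuity are all equivalent. -/
theorem meanEquicontinuous_tfae [CompleteSpace X] (T : ℕ → X →L[ℝ] Y) :
    List.TFAE [
      MeanEquicontinuous T,
      ∀ x : X, BddAbove (Set.range fun n => avg T x n),
      AbsolutelyCesaroBounded T,
      ∀ ε : ℝ, 0 < ε → ∃ δ : ℝ, 0 < δ ∧ ∀ x y : X, ‖x - y‖ < δ →
        ∃ c : ℝ, c < ε ∧ ∀ n : ℕ, mavg T x y n ≤ c] :=
  meanEquicontinuous_tfae_general T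
end

section
/- Let (T_i)_{i=1}^∞ be a sequence of bounded linear operators from a Banach space X to a normed linear space Y. If the mean asymptotic cell MAsym(T_i,0) = {x∈X : lim_{n→∞} (1/n)∑_{i=1}^n ‖T_i x‖ = 0} is residual (comeagre) in X, then MAsym(T_i,0) = X, i.e., every x∈X satisfies lim_{n→∞} (1/n)∑_{i=1}^n ‖T_i x‖ = 0. -/
/-!
A residual subgroup `H` of a Baire group is the whole group: for every `x` the coset `x * H` is also
residual, so it meets `H`, and then `x ∈ H`. The Cesàro averages of `x ↦ ‖T i x‖` are seminorms, so
the points at which they tend to zero form a subgroup.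
-/

open Filter Topology

variable {X Y : Type*} [NormedAddCommGroup X] [NormedSpace ℝ X]
  [NormedAddCommGroup Y] [NormedSpace ℝ Y]

section ResidualSubgroup

variable {G : Type*} [Group G] [TopologicalSpace G] [SeparatelyContinuousMul G] [BaireSpace G]

@[to_additive]
theorem subgroup_eq_top_of_mem_residual {H : Subgroup G} (hH : (H : Set G) ∈ residual G) :
    H = ⊤ := by
  refine (Subgroup.eq_top_iff' H).2 fun x => ?_
  have coset_mem_residual : (x⁻¹ * ·) ⁻¹' (H : Set G) ∈ residual G :=
    tendsto_residual_of_isOpenMap (continuous_const_mul x⁻¹) (isOpenMap_mul_left x⁻¹) hH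
  obtain ⟨a, ha, hxa⟩ := (dense_of_mem_residual (inter_mem hH coset_mem_residual)).nonempty
  exact inv_mem_iff.1 ((mul_mem_cancel_right ha).1 hxa)

end ResidualSubgroup

section VanishingSubgroup

variable {ι G E : Type*} [AddGroup G] [SeminormedAddGroup E]

/-- The subgroup of points at which a family of seminorms tends to zero along a filter. For the
Cesàro averages of `x ↦ ‖T i x‖` along `atTop` it is the mean asymptotic cell of `0`. -/
def vanishingSubgroup (p : ι → AddGroupSeminorm G) (l : Filter ι) : AddSubgroup G where
  carrier := {x | Tendsto (p · x) l (𝓝 0)}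
  zero_mem' := by simp [tendsto_const_nhds]
  add_mem' {x y} hx hy :=
    squeeze_zero (fun n => apply_nonneg (p n) (x + y)) (fun n => map_add_le_add (p n) x y)
      (by simpa using Tendsto.add hx hy)
  neg_mem' := by simp

/-- The Cesàro average `x ↦ (1/n) ∑_{i=1}^{n} ‖f i x‖` of the norms of a sequence of homomorphisms,
as a seminorm on the group. For `n = 0` its value is `0 / 0 = 0`. -/
noncomputable def cesaroSeminorm (f : ℕ → G →+ E) (n : ℕ) : AddGroupSeminorm G where
  toFun x := (∑ i ∈ Finset.Icc 1 n, ‖f i x‖) / n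
  map_zero' := by simp
  add_le' x y := by
    rw [← add_div, ← Finset.sum_add_distrib]
    gcongr with i
    simpa only [map_add] using norm_add_le (f i x) (f i y)
  neg' := by simp

end VanishingSubgroup

theorem meanAsymptoticCell_eq_univ_of_residual_general {G E : Type*} [AddGroup G]
    [TopologicalSpace G] [SeparatelyContinuousAdd G] [BaireSpace G] [SeminormedAddGroup E]
    (f : ℕ → G →+ E)
    (h : {x : G | Tendsto (fun n : ℕ => (∑ i ∈ Finset.Icc 1 n, ‖f i x‖) / n) atTop (𝓝 0)} ∈
      residual G)
    (x : G) : Tendsto (fun n : ℕ => (∑ i ∈ Finset.Icc 1 n, ‖f i x‖) / n) atTop (𝓝 0) := by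
  have cell_eq_top : vanishingSubgroup (cesaroSeminorm f) atTop = ⊤ :=
    addSubgroup_eq_top_of_mem_residual h
  exact (AddSubgroup.eq_top_iff' _).1 cell_eq_top x

/-- If the mean asymptotic cell of `0` is residual in a Banach space `X`, then it is
all of `X`. -/
theorem meanAsymptoticCell_eq_univ_of_residual [CompleteSpace X] (T : ℕ → X →L[ℝ] Y)
    (h : {x : X | Filter.Tendsto (avg T x) Filter.atTop (nhds 0)} ∈ residual X) :
    ∀ x : X, Filter.Tendsto (avg T x) Filter.atTop (nhds 0) :=
  meanAsymptoticCell_eq_univ_of_residual_general (fun i => (T i : X →+ Y)) h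
end

section
/- Let (T_i)_{i=1}^∞ be a submultiplicative sequence of bounded linear operators on a Banach space X. If (T_i) is mean equicontinuous, then every proximal pair is mean asymptotic; that is, if (x,y)∈X×X satisfies inf_{k∈ℕ} ‖T_k x − T_k y‖ = 0 (there exists k with ‖T_k x − T_k y‖ arbitrarily small), then lim_{n→∞} (1/n)∑_{i=1}^n ‖T_i x − T_i y‖ = 0. -/
open Filter Topology

variable {X Y : Type*} [NormedAddCommGroup X] [NormedSpace ℝ X]
  [NormedAddCommGroup Y] [NormedSpace ℝ Y]

/-- The sequence `(T i)` is submultiplicative: `‖T (i+m) z‖ ≤ C ‖T i (T m z)‖`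
for all `z` and all indices `i, m ≥ 1`. -/
def Submultiplicative (T : ℕ → X →L[ℝ] X) : Prop :=
  ∃ C : ℝ, 0 < C ∧ ∀ z : X, ∀ i m : ℕ, 1 ≤ i → 1 ≤ m →
    ‖T (i + m) z‖ ≤ C * ‖T i (T m z)‖

/-!
Submultiplicativity compares the orbit of `(x, y)` after time `k` with the orbit of
`(T k x, T k y)`. A limit of Cesàro averages forgets the first `k` terms, so
`msup T x y ≤ C * msup T (T k x) (T k y)` with `C` independent of `k`. Along a proximal pair
`‖T k x - T k y‖` is as small as desired, so mean equicontinuity makes the right-hand side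
arbitrarily small.
-/

lemma sum_Icc_one_add {M : Type*} [AddCommMonoid M] (a : ℕ → M) (n k : ℕ) :
    ∑ i ∈ Finset.Icc 1 (n + k), a i =
      ∑ i ∈ Finset.Icc 1 k, a i + ∑ i ∈ Finset.Icc 1 n, a (i + k) := by
  induction n with
  | zero => simp
  | succ n ih =>
    rw [Nat.add_right_comm, Finset.sum_Icc_succ_top (by lia), ih,
      Finset.sum_Icc_succ_top (by lia), add_assoc, Nat.add_right_comm]

lemma sum_Icc_one_le_of_shift_le {R : Type*} [NonUnitalNonAssocSemiring R] [PartialOrder R]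
    [IsOrderedAddMonoid R] {a b : ℕ → R} {C : R} {k : ℕ} (ha : ∀ i, 0 ≤ a i)
    (hab : ∀ i, 1 ≤ i → a (i + k) ≤ C * b i) (n : ℕ) :
    ∑ i ∈ Finset.Icc 1 n, a i ≤ ∑ i ∈ Finset.Icc 1 k, a i + C * ∑ i ∈ Finset.Icc 1 n, b i :=
  calc
    ∑ i ∈ Finset.Icc 1 n, a i ≤ ∑ i ∈ Finset.Icc 1 (n + k), a i :=
      Finset.sum_le_sum_of_subset_of_nonneg
        (Finset.Icc_subset_Icc_right (Nat.le_add_right n k)) fun i _ _ ↦ ha i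
    _ = ∑ i ∈ Finset.Icc 1 k, a i + ∑ i ∈ Finset.Icc 1 n, a (i + k) := sum_Icc_one_add a n k
    _ ≤ ∑ i ∈ Finset.Icc 1 k, a i + C * ∑ i ∈ Finset.Icc 1 n, b i := by
      rw [Finset.mul_sum]
      gcongr with i hi
      exact hab i (Finset.mem_Icc.mp hi).1

lemma mavg_nonneg (T : ℕ → X →L[ℝ] Y) (x y : X) (n : ℕ) : 0 ≤ mavg T x y n :=
  div_nonneg (Finset.sum_nonneg fun _ _ ↦ norm_nonneg _) n.cast_nonneg

lemma tendsto_mavg_zero_of_msup_nonpos {T : ℕ → X →L[ℝ] Y} {x y : X} (h : msup T x y ≤ 0) :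
    Tendsto (mavg T x y) atTop (𝓝 0) := by
  have h_liminf : 0 ≤ liminf (fun n ↦ (mavg T x y n : EReal)) atTop :=
    le_liminf_of_le (h := .of_forall fun n ↦ EReal.coe_nonneg.mpr (mavg_nonneg T x y n))
  exact EReal.tendsto_coe.mp (tendsto_of_le_liminf_of_limsup_le h_liminf h)

lemma mavg_le_of_norm_shift_le {T : ℕ → X →L[ℝ] Y} {C : ℝ} {k : ℕ} {x y u v : X}
    (h : ∀ i, 1 ≤ i → ‖T (i + k) x - T (i + k) y‖ ≤ C * ‖T i u - T i v‖) (n : ℕ) :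
    mavg T x y n ≤ (∑ i ∈ Finset.Icc 1 k, ‖T i x - T i y‖) / n + C * mavg T u v n := by
  rw [mavg, mavg, ← mul_div_assoc, ← add_div]
  gcongr
  exact sum_Icc_one_le_of_shift_le (fun _ ↦ norm_nonneg _) h n

lemma msup_le_of_norm_shift_le {T : ℕ → X →L[ℝ] Y} {C : ℝ} (hC : 0 ≤ C) {k : ℕ} {x y u v : X}
    (h : ∀ i, 1 ≤ i → ‖T (i + k) x - T (i + k) y‖ ≤ C * ‖T i u - T i v‖) :
    msup T x y ≤ C * msup T u v := by
  set S : ℝ := ∑ i ∈ Finset.Icc 1 k, ‖T i x - T i y‖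
  let head : ℕ → EReal := fun n ↦ (S / n : ℝ)
  let tail : ℕ → EReal := fun n ↦ C * mavg T u v n
  have h_head : limsup head atTop = 0 :=
    (EReal.tendsto_coe.mpr (tendsto_const_div_atTop_nhds_zero_nat S)).limsup_eq
  have h_tail : limsup tail atTop = C * msup T u v :=
    EReal.limsup_const_mul_of_nonneg_of_ne_top (EReal.coe_nonneg.mpr hC) (EReal.coe_ne_top C)
  have h_le (n : ℕ) : (mavg T x y n : EReal) ≤ head n + tail n := by
    simp only [head, tail]
    exact_mod_cast mavg_le_of_norm_shift_le h n
  calc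
    msup T x y ≤ limsup (head + tail) atTop := limsup_le_limsup (.of_forall h_le)
    _ ≤ limsup head atTop + limsup tail atTop :=
      EReal.limsup_add_le (.inl (by simp [h_head])) (.inl (by simp [h_head]))
    _ = C * msup T u v := by rw [h_head, h_tail, zero_add]

lemma Submultiplicative.exists_msup_le {T : ℕ → X →L[ℝ] X} (hT : Submultiplicative T) :
    ∃ C : ℝ, 0 < C ∧ ∀ (x y : X) (k : ℕ), 1 ≤ k →
      msup T x y ≤ C * msup T (T k x) (T k y) := by
  obtain ⟨C, hC, h_norm⟩ := hT
  refine ⟨C, hC, fun x y k hk ↦ msup_le_of_norm_shift_le (k := k) hC.le fun i hi ↦ ?_⟩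
  simpa only [map_sub] using h_norm (x - y) i k hi hk

theorem meanAsymptotic_of_proximal_general (T : ℕ → X →L[ℝ] X)
    (hsub : Submultiplicative T) (heq : MeanEquicontinuous T) (x y : X)
    (hprox : ∀ δ : ℝ, 0 < δ → ∃ k : ℕ, 1 ≤ k ∧ ‖T k x - T k y‖ < δ) :
    Tendsto (mavg T x y) atTop (𝓝 0) := by
  obtain ⟨C, hC, h_msup⟩ := hsub.exists_msup_le
  refine tendsto_mavg_zero_of_msup_nonpos (EReal.le_of_forall_lt_iff_le.mp fun ε hε ↦ ?_)
  obtain ⟨δ, hδ, h_small⟩ := heq (ε / C) (div_pos (EReal.coe_pos.mp hε) hC)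
  obtain ⟨k, hk, h_close⟩ := hprox δ hδ
  calc
    msup T x y ≤ C * msup T (T k x) (T k y) := h_msup x y k hk
    _ ≤ C * (ε / C : ℝ) :=
      mul_le_mul_of_nonneg_left (h_small _ _ h_close).le (EReal.coe_nonneg.mpr hC.le)
    _ = ε := by rw [← EReal.coe_mul, mul_div_cancel₀ ε hC.ne']

/-- For a submultiplicative, mean equicontinuous sequence of bounded linear operators
on a Banach space, every proximal pair is mean asymptotic. -/
theorem meanAsymptotic_of_proximal [CompleteSpace X] (T : ℕ → X →L[ℝ] X)
    (hsub : Submultiplicative T) (heq : MeanEquicontinuous T) (x y : X)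
    (hprox : ∀ δ : ℝ, 0 < δ → ∃ k : ℕ, 1 ≤ k ∧ ‖T k x - T k y‖ < δ) :
    Filter.Tendsto (mavg T x y) Filter.atTop (nhds 0) :=
  meanAsymptotic_of_proximal_general T hsub heq x y hprox
end
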